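/- arXiv:2005.08895 — 7 statements merged into one kernel-verified Lean document; each statement's English description precedes it below -/
import Mathlib

section
/- Let n ≥ 1 and let φ : ℝⁿ → ℝⁿ be twice continuously differentiable. Then the following are equivalent: (i) for every twice continuously differentiable function I : ℝⁿ → ℝ, every x ∈ ℝⁿ and all v, w ∈ ℝⁿ, the second derivative satisfies D²(I ∘ φ)(x)(v, w) = D²I(φ(x))(Dφ(x)v, Dφ(x)w); (ii) φ is affine, i.e. there exist a linear map A : ℝⁿ → ℝⁿ and a vector b ∈ ℝⁿ such that φ(x) = A x + b for all x. (This expresses that the affine transformations are exactly the transformations of V preserving the variance form σ₂, whose value on a Legendrian submanifold given by a function I is the Hessian form D²I.) -/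
/-!
By the second-order chain rule,
`D²(I ∘ φ)(x)(v, w) = D²I(φ x)(Dφ(x) v, Dφ(x) w) + DI(φ x)(D²φ(x)(v, w))`,
so `φ` preserves Hessians exactly when the last term vanishes for every `I`. Continuous linear
functionals `I` already separate points, so this forces `D²φ = 0`, that is, `Dφ` is constant and
`φ` is affine.
-/

open scoped Topology

section NontriviallyNormedField

variable {𝕜 E F G : Type*} [NontriviallyNormedField 𝕜]
  [NormedAddCommGroup E] [NormedSpace 𝕜 E] [NormedAddCommGroup F] [NormedSpace 𝕜 F]
  [NormedAddCommGroup G] [NormedSpace 𝕜 G]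

theorem differentiable_fderiv_of_contDiff_two {f : E → F} (hf : ContDiff 𝕜 2 f) :
    Differentiable 𝕜 (fderiv 𝕜 f) :=
  (hf.fderiv_right one_add_one_eq_two.le).differentiable one_ne_zero

theorem fderiv_fderiv_comp_apply {f : E → F} {g : F → G} {x : E}
    (hf : ∀ᶠ y in 𝓝 x, DifferentiableAt 𝕜 f y)
    (hf' : DifferentiableAt 𝕜 (fderiv 𝕜 f) x)
    (hg : ∀ᶠ z in 𝓝 (f x), DifferentiableAt 𝕜 g z)
    (hg' : DifferentiableAt 𝕜 (fderiv 𝕜 g) (f x)) (v w : E) :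
    fderiv 𝕜 (fderiv 𝕜 (g ∘ f)) x v w =
      fderiv 𝕜 (fderiv 𝕜 g) (f x) (fderiv 𝕜 f x v) (fderiv 𝕜 f x w) +
        fderiv 𝕜 g (f x) (fderiv 𝕜 (fderiv 𝕜 f) x v w) := by
  have hfx : DifferentiableAt 𝕜 f x := hf.self_of_nhds
  have chain_rule :
      fderiv 𝕜 (g ∘ f) =ᶠ[𝓝 x] fun y ↦ (fderiv 𝕜 g (f y)).comp (fderiv 𝕜 f y) := by
    filter_upwards [hf, hfx.continuousAt.eventually hg] with y hfy hgy
    exact fderiv_comp y hgy hfy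
  have product_rule :=
    (hg'.hasFDerivAt.comp x hfx.hasFDerivAt).clm_comp hf'.hasFDerivAt
  rw [(product_rule.congr_of_eventuallyEq chain_rule).fderiv]
  simp [add_comm]

variable (𝕜) in
/-- `φ` preserves the variance form `σ₂`: the Hessian form of every `C²` function pulls back along
`φ` to the Hessian form of the composite. The Hessian form of `I` is encoded as the iterated
Fréchet derivative `fderiv 𝕜 (fderiv 𝕜 I)`. -/
def PreservesHessian (φ : E → F) : Prop :=
  ∀ I : F → 𝕜, ContDiff 𝕜 2 I → ∀ x v w : E,
    fderiv 𝕜 (fderiv 𝕜 (I ∘ φ)) x v w =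
      fderiv 𝕜 (fderiv 𝕜 I) (φ x) (fderiv 𝕜 φ x v) (fderiv 𝕜 φ x w)

theorem preservesHessian_iff_fderiv_fderiv_eq_zero [SeparatingDual 𝕜 F] {φ : E → F}
    (hφ : Differentiable 𝕜 φ) (hφ' : Differentiable 𝕜 (fderiv 𝕜 φ)) :
    PreservesHessian 𝕜 φ ↔ ∀ x, fderiv 𝕜 (fderiv 𝕜 φ) x = 0 := by
  have second_order_chain_rule {I : F → 𝕜} (hI : ContDiff 𝕜 2 I) (x v w : E) :=
    fderiv_fderiv_comp_apply (.of_forall hφ) (hφ' x)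
      (.of_forall <| hI.differentiable two_ne_zero)
      (differentiable_fderiv_of_contDiff_two hI (φ x)) v w
  constructor
  · intro h x
    ext v w
    refine SeparatingDual.eq_zero_of_forall_dual_eq_zero (R := 𝕜) fun ℓ ↦ ?_
    simpa [h ℓ ℓ.contDiff] using second_order_chain_rule ℓ.contDiff x v w
  · intro h I hI x v w
    simpa [h x] using second_order_chain_rule hI x v w

end NontriviallyNormedField

section RCLike

variable {𝕜 E F : Type*} [RCLike 𝕜]
  [NormedAddCommGroup E] [NormedSpace 𝕜 E] [NormedAddCommGroup F] [NormedSpace 𝕜 F]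

theorem fderiv_fderiv_eq_zero_iff_exists_eq_add {f : E → F} (hf : Differentiable 𝕜 f)
    (hf' : Differentiable 𝕜 (fderiv 𝕜 f)) :
    (∀ x, fderiv 𝕜 (fderiv 𝕜 f) x = 0) ↔
      ∃ (A : E →L[𝕜] F) (b : F), ∀ x, f x = A x + b := by
  have fderiv_affine (A : E →L[𝕜] F) (b : F) : fderiv 𝕜 (fun x ↦ A x + b) = fun _ ↦ A := by
    ext1 x
    rw [fderiv_add_const, A.fderiv]
  constructor
  · intro h
    have same_fderiv (x : E) :
        fderiv 𝕜 f x = fderiv 𝕜 (fun y ↦ fderiv 𝕜 f 0 y + f 0) x := by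
      rw [fderiv_affine]
      exact is_const_of_fderiv_eq_zero hf' h x 0
    exact ⟨fderiv 𝕜 f 0, f 0,
      congrFun <| eq_of_fderiv_eq hf (by fun_prop) same_fderiv 0 (by simp)⟩
  · rintro ⟨A, b, hA⟩ x
    rw [funext hA, fderiv_affine, fderiv_const_apply]

theorem affine_iff_preserves_hessian_general {φ : E → F} (hφ : Differentiable 𝕜 φ)
    (hφ' : Differentiable 𝕜 (fderiv 𝕜 φ)) :
    PreservesHessian 𝕜 φ ↔ ∃ (A : E →L[𝕜] F) (b : F), ∀ x, φ x = A x + b :=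
  (preservesHessian_iff_fderiv_fderiv_eq_zero hφ hφ').trans
    (fderiv_fderiv_eq_zero_iff_exists_eq_add hφ hφ')

end RCLike

/-- Let `φ : ℝⁿ → ℝⁿ` (`n ≥ 1`) be twice continuously differentiable.  Then `φ`
preserves the Hessian (variance) form of every twice continuously differentiable
function `I : ℝⁿ → ℝ`, in the sense that
`D²(I ∘ φ)(x)(v, w) = D²I(φ(x))(Dφ(x)v, Dφ(x)w)` for all `x, v, w`,
if and only if `φ` is affine, i.e. `φ(x) = A x + b` for a linear map `A` and a
vector `b`. -/
theorem affine_iff_preserves_hessian (n : ℕ) (hn : 1 ≤ n)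
    (φ : (Fin n → ℝ) → (Fin n → ℝ)) (hφ : ContDiff ℝ 2 φ) :
    (∀ I : (Fin n → ℝ) → ℝ, ContDiff ℝ 2 I →
        ∀ x v w : Fin n → ℝ,
          fderiv ℝ (fderiv ℝ (I ∘ φ)) x v w =
            fderiv ℝ (fderiv ℝ I) (φ x) (fderiv ℝ φ x v) (fderiv ℝ φ x w)) ↔
      (∃ (A : (Fin n → ℝ) →ₗ[ℝ] (Fin n → ℝ)) (b : Fin n → ℝ),
        ∀ x, φ x = A x + b) :=
  (affine_iff_preserves_hessian_general (hφ.differentiable two_ne_zero)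
      (differentiable_fderiv_of_contDiff_two hφ)).trans <|
    LinearMap.toContinuousLinearMap.symm.toEquiv.exists_congr fun _ ↦ .rfl
end

section
/- Let (Ω, 𝒜, μ₀) be a probability space, X : Ω → ℝⁿ measurable, and λ ∈ ℝⁿ such that Z(λ) = ∫_Ω exp⟨λ, X⟩ dμ₀ is finite and positive and X·exp⟨λ, X⟩ is μ₀-integrable. Set ρ_λ = exp⟨λ, X⟩ / Z(λ) and x = ∫_Ω X ρ_λ dμ₀ ∈ ℝⁿ. Then ∫_Ω ρ_λ log ρ_λ dμ₀ = ⟨λ, x⟩ − log Z(λ), and for every measurable ρ : Ω → [0, ∞) satisfying ∫_Ω ρ dμ₀ = 1, with X·ρ μ₀-integrable and ∫_Ω X ρ dμ₀ = x, and with ρ log ρ μ₀-integrable, one has ∫_Ω ρ log ρ dμ₀ ≥ ⟨λ, x⟩ − log Z(λ), with equality if and only if ρ = ρ_λ μ₀-almost everywhere. (Thus the density of exponential form minimizes the information gain among all densities measuring the same point x, which is the principle of minimal information gain.) -/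
open MeasureTheory
open scoped InnerProductSpace

/-!
For probability densities `p` and `q > 0`, Gibbs' inequality `∫ p log q ≤ ∫ p log p`, with
equality only for `p = q` almost everywhere, holds because the difference of the two sides is the
integral of `q · klFun (p / q)`, and `klFun` is nonnegative and vanishes only at `1`. The logarithm
of the tilted density `q = exp f / Z` is `f - log Z`, so the left-hand side is `∫ p f - log Z`.
When `f = ⟨λ, X⟩`, this depends on `p` only through the point `∫ p X` that it measures; in
particular it is the information gain of `q` itself whenever `q` measures the same point.
-/

open InformationTheory (klFun klFun_apply klFun_nonneg klFun_eq_zero_iff)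

lemma mul_klFun_div (p : ℝ) {q : ℝ} (hq : q ≠ 0) :
    q * klFun (p / q) = p * Real.log p - p * Real.log q + q - p := by
  rcases eq_or_ne p 0 with rfl | hp
  · simp [klFun_apply]
  · rw [klFun_apply, Real.log_div hp hq]
    field_simp

section Gibbs

variable {Ω : Type*} [MeasurableSpace Ω] {μ : Measure Ω} {p q : Ω → ℝ}

/-- The information gain (Kullback–Leibler divergence) of the measure with density `ρ` from `μ`.
It is the junk value `0` when `ρ log ρ` is not integrable. -/
noncomputable def informationGain (μ : Measure Ω) (ρ : Ω → ℝ) : ℝ :=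
  ∫ ω, ρ ω * Real.log (ρ ω) ∂μ

lemma integrable_mul_klFun_div (hq₀ : ∀ᵐ ω ∂μ, q ω ≠ 0) (hp : Integrable p μ)
    (hq : Integrable q μ) (hpp : Integrable (fun ω => p ω * Real.log (p ω)) μ)
    (hpq : Integrable (fun ω => p ω * Real.log (q ω)) μ) :
    Integrable (fun ω => q ω * klFun (p ω / q ω)) μ :=
  (((hpp.sub hpq).add hq).sub hp).congr <| hq₀.mono fun ω hω => (mul_klFun_div (p ω) hω).symm

lemma integral_mul_klFun_div (hq₀ : ∀ᵐ ω ∂μ, q ω ≠ 0) (hp : Integrable p μ)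
    (hq : Integrable q μ) (hpp : Integrable (fun ω => p ω * Real.log (p ω)) μ)
    (hpq : Integrable (fun ω => p ω * Real.log (q ω)) μ) :
    ∫ ω, q ω * klFun (p ω / q ω) ∂μ =
      informationGain μ p - ∫ ω, p ω * Real.log (q ω) ∂μ + ∫ ω, q ω ∂μ - ∫ ω, p ω ∂μ := by
  have hsub : Integrable (fun ω => p ω * Real.log (p ω) - p ω * Real.log (q ω)) μ :=
    hpp.sub hpq
  rw [integral_congr_ae (hq₀.mono fun ω hω => mul_klFun_div (p ω) hω),
    integral_sub (hsub.fun_add hq) hp, integral_add hsub hq, integral_sub hpp hpq,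
    informationGain]

lemma mul_klFun_div_nonneg_ae (hp₀ : 0 ≤ᵐ[μ] p) (hq₀ : ∀ᵐ ω ∂μ, 0 < q ω) :
    0 ≤ᵐ[μ] fun ω => q ω * klFun (p ω / q ω) := by
  filter_upwards [hp₀, hq₀] with ω hpω hqω
  exact mul_nonneg hqω.le (klFun_nonneg (div_nonneg hpω hqω.le))

theorem integral_mul_log_le_informationGain (hp₀ : 0 ≤ᵐ[μ] p) (hq₀ : ∀ᵐ ω ∂μ, 0 < q ω)
    (hp : Integrable p μ) (hq : Integrable q μ) (hmass : ∫ ω, q ω ∂μ ≤ ∫ ω, p ω ∂μ)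
    (hpp : Integrable (fun ω => p ω * Real.log (p ω)) μ)
    (hpq : Integrable (fun ω => p ω * Real.log (q ω)) μ) :
    ∫ ω, p ω * Real.log (q ω) ∂μ ≤ informationGain μ p := by
  have hnonneg := integral_nonneg_of_ae (mul_klFun_div_nonneg_ae hp₀ hq₀)
  rw [integral_mul_klFun_div (hq₀.mono fun _ => ne_of_gt) hp hq hpp hpq] at hnonneg
  linarith

theorem informationGain_eq_integral_mul_log_iff (hp₀ : 0 ≤ᵐ[μ] p) (hq₀ : ∀ᵐ ω ∂μ, 0 < q ω)
    (hp : Integrable p μ) (hq : Integrable q μ) (hmass : ∫ ω, q ω ∂μ ≤ ∫ ω, p ω ∂μ)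
    (hpp : Integrable (fun ω => p ω * Real.log (p ω)) μ)
    (hpq : Integrable (fun ω => p ω * Real.log (q ω)) μ) :
    informationGain μ p = ∫ ω, p ω * Real.log (q ω) ∂μ ↔ p =ᵐ[μ] q := by
  refine ⟨fun heq => ?_, fun hae => integral_congr_ae <| hae.mono fun ω hω => by simp only [hω]⟩
  have hq_ne : ∀ᵐ ω ∂μ, q ω ≠ 0 := hq₀.mono fun _ => ne_of_gt
  have hnonneg := mul_klFun_div_nonneg_ae hp₀ hq₀
  have hzero : ∫ ω, q ω * klFun (p ω / q ω) ∂μ = 0 := by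
    refine le_antisymm ?_ (integral_nonneg_of_ae hnonneg)
    rw [integral_mul_klFun_div hq_ne hp hq hpp hpq]
    linarith
  rw [integral_eq_zero_iff_of_nonneg_ae hnonneg
    (integrable_mul_klFun_div hq_ne hp hq hpp hpq)] at hzero
  filter_upwards [hzero, hp₀, hq₀] with ω hω hpω hqω
  have hdiv : p ω / q ω = 1 :=
    (klFun_eq_zero_iff (div_nonneg hpω hqω.le)).1 ((mul_eq_zero.1 hω).resolve_left hqω.ne')
  exact (div_eq_one_iff_eq hqω.ne').1 hdiv

end Gibbs

section Tilted

variable {Ω : Type*} [MeasurableSpace Ω] {μ : Measure Ω} {f p : Ω → ℝ}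

/-- The partition function of the exponent `f`; the paper's `Z(λ)` is the case `f = ⟨λ, X⟩`. -/
noncomputable def partitionFunction (μ : Measure Ω) (f : Ω → ℝ) : ℝ :=
  ∫ ω, Real.exp (f ω) ∂μ

/-- The density of exponential form `exp f / Z`, which is the density of `μ.tilted f` as a
real-valued function; the paper's `ρ_λ` is the case `f = ⟨λ, X⟩`. -/
noncomputable def tiltedDensity (μ : Measure Ω) (f : Ω → ℝ) (ω : Ω) : ℝ :=
  Real.exp (f ω) / partitionFunction μ f

lemma partitionFunction_pos [NeZero μ] (hf : Integrable (fun ω => Real.exp (f ω)) μ) :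
    0 < partitionFunction μ f :=
  integral_exp_pos hf

lemma tiltedDensity_pos [NeZero μ] (hf : Integrable (fun ω => Real.exp (f ω)) μ) (ω : Ω) :
    0 < tiltedDensity μ f ω :=
  div_pos (Real.exp_pos _) (partitionFunction_pos hf)

lemma log_tiltedDensity [NeZero μ] (hf : Integrable (fun ω => Real.exp (f ω)) μ) (ω : Ω) :
    Real.log (tiltedDensity μ f ω) = f ω - Real.log (partitionFunction μ f) := by
  rw [tiltedDensity, Real.log_div (Real.exp_ne_zero _) (partitionFunction_pos hf).ne',
    Real.log_exp]

lemma integrable_tiltedDensity (hf : Integrable (fun ω => Real.exp (f ω)) μ) :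
    Integrable (tiltedDensity μ f) μ :=
  hf.div_const _

lemma integral_tiltedDensity [NeZero μ] (hf : Integrable (fun ω => Real.exp (f ω)) μ) :
    ∫ ω, tiltedDensity μ f ω ∂μ = 1 := by
  simp only [tiltedDensity]
  rw [integral_div]
  exact div_self (partitionFunction_pos hf).ne'

lemma integrable_tiltedDensity_smul {E : Type*} [NormedAddCommGroup E] [NormedSpace ℝ E]
    {X : Ω → E} (hX : Integrable (fun ω => Real.exp (f ω) • X ω) μ) :
    Integrable (fun ω => tiltedDensity μ f ω • X ω) μ := by
  simpa only [tiltedDensity, div_eq_inv_mul, mul_smul] using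
    hX.fun_smul (partitionFunction μ f)⁻¹

lemma integrable_mul_log_tiltedDensity [NeZero μ]
    (hf : Integrable (fun ω => Real.exp (f ω)) μ) (hp : Integrable p μ)
    (hpf : Integrable (fun ω => p ω * f ω) μ) :
    Integrable (fun ω => p ω * Real.log (tiltedDensity μ f ω)) μ := by
  simp only [log_tiltedDensity hf, mul_sub]
  exact hpf.sub (hp.mul_const _)

lemma integral_mul_log_tiltedDensity [NeZero μ]
    (hf : Integrable (fun ω => Real.exp (f ω)) μ) (hp : Integrable p μ)
    (hpf : Integrable (fun ω => p ω * f ω) μ) :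
    ∫ ω, p ω * Real.log (tiltedDensity μ f ω) ∂μ =
      ∫ ω, p ω * f ω ∂μ - (∫ ω, p ω ∂μ) * Real.log (partitionFunction μ f) := by
  simp only [log_tiltedDensity hf, mul_sub]
  rw [integral_sub hpf (hp.mul_const _), integral_mul_const]

theorem informationGain_tiltedDensity [NeZero μ]
    (hf : Integrable (fun ω => Real.exp (f ω)) μ)
    (hff : Integrable (fun ω => tiltedDensity μ f ω * f ω) μ) :
    informationGain μ (tiltedDensity μ f) =
      ∫ ω, tiltedDensity μ f ω * f ω ∂μ - Real.log (partitionFunction μ f) := by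
  rw [informationGain, integral_mul_log_tiltedDensity hf (integrable_tiltedDensity hf) hff,
    integral_tiltedDensity hf, one_mul]

theorem integral_mul_sub_log_partitionFunction_le_informationGain [NeZero μ]
    (hf : Integrable (fun ω => Real.exp (f ω)) μ) (hp₀ : 0 ≤ᵐ[μ] p) (hp₁ : ∫ ω, p ω ∂μ = 1)
    (hpf : Integrable (fun ω => p ω * f ω) μ)
    (hpp : Integrable (fun ω => p ω * Real.log (p ω)) μ) :
    ∫ ω, p ω * f ω ∂μ - Real.log (partitionFunction μ f) ≤ informationGain μ p := by
  have hp : Integrable p μ := .of_integral_ne_zero (hp₁ ▸ one_ne_zero)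
  have hgibbs := integral_mul_log_le_informationGain hp₀ (ae_of_all μ (tiltedDensity_pos hf)) hp
    (integrable_tiltedDensity hf) ((integral_tiltedDensity hf).trans hp₁.symm).le hpp
    (integrable_mul_log_tiltedDensity hf hp hpf)
  rwa [integral_mul_log_tiltedDensity hf hp hpf, hp₁, one_mul] at hgibbs

theorem informationGain_eq_integral_mul_sub_log_partitionFunction_iff [NeZero μ]
    (hf : Integrable (fun ω => Real.exp (f ω)) μ) (hp₀ : 0 ≤ᵐ[μ] p) (hp₁ : ∫ ω, p ω ∂μ = 1)
    (hpf : Integrable (fun ω => p ω * f ω) μ)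
    (hpp : Integrable (fun ω => p ω * Real.log (p ω)) μ) :
    informationGain μ p = ∫ ω, p ω * f ω ∂μ - Real.log (partitionFunction μ f) ↔
      p =ᵐ[μ] tiltedDensity μ f := by
  have hp : Integrable p μ := .of_integral_ne_zero (hp₁ ▸ one_ne_zero)
  have hgibbs := informationGain_eq_integral_mul_log_iff hp₀
    (ae_of_all μ (tiltedDensity_pos hf)) hp (integrable_tiltedDensity hf)
    ((integral_tiltedDensity hf).trans hp₁.symm).le hpp (integrable_mul_log_tiltedDensity hf hp hpf)
  rwa [integral_mul_log_tiltedDensity hf hp hpf, hp₁, one_mul] at hgibbs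

end Tilted

section Functional

variable {Ω E : Type*} [MeasurableSpace Ω] [NormedAddCommGroup E] [NormedSpace ℝ E]
  {μ : Measure Ω} {p : Ω → ℝ} {X : Ω → E}

lemma integrable_mul_functional_comp (L : StrongDual ℝ E)
    (hpX : Integrable (fun ω => p ω • X ω) μ) : Integrable (fun ω => p ω * L (X ω)) μ := by
  simpa only [map_smul, smul_eq_mul] using L.integrable_comp hpX

lemma integral_mul_functional_comp [CompleteSpace E] (L : StrongDual ℝ E)
    (hpX : Integrable (fun ω => p ω • X ω) μ) :
    ∫ ω, p ω * L (X ω) ∂μ = L (∫ ω, p ω • X ω ∂μ) := by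
  simpa only [map_smul, smul_eq_mul] using L.integral_comp_comm hpX

end Functional

theorem minimal_information_gain_general {Ω E : Type*} [MeasurableSpace Ω]
    [NormedAddCommGroup E] [NormedSpace ℝ E] [CompleteSpace E] (μ : Measure Ω) [NeZero μ]
    (X : Ω → E) (L : StrongDual ℝ E)
    (hexp : Integrable (fun ω => Real.exp (L (X ω))) μ)
    (hXexp : Integrable (fun ω => Real.exp (L (X ω)) • X ω) μ)
    (x : E) (hx : x = ∫ ω, tiltedDensity μ (fun ω => L (X ω)) ω • X ω ∂μ) :
    informationGain μ (tiltedDensity μ fun ω => L (X ω)) =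
        L x - Real.log (partitionFunction μ fun ω => L (X ω)) ∧
      ∀ ρ : Ω → ℝ, 0 ≤ᵐ[μ] ρ → ∫ ω, ρ ω ∂μ = 1 →
        Integrable (fun ω => ρ ω • X ω) μ → ∫ ω, ρ ω • X ω ∂μ = x →
        Integrable (fun ω => ρ ω * Real.log (ρ ω)) μ →
        L x - Real.log (partitionFunction μ fun ω => L (X ω)) ≤ informationGain μ ρ ∧
          (informationGain μ ρ = L x - Real.log (partitionFunction μ fun ω => L (X ω)) ↔
            ρ =ᵐ[μ] tiltedDensity μ fun ω => L (X ω)) := by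
  constructor
  · have hρX := integrable_tiltedDensity_smul hXexp
    rw [hx, ← integral_mul_functional_comp L hρX]
    exact informationGain_tiltedDensity hexp (integrable_mul_functional_comp L hρX)
  · rintro ρ hρ₀ hρ₁ hρX rfl hρρ
    have hρL := integrable_mul_functional_comp L hρX
    rw [← integral_mul_functional_comp L hρX]
    exact ⟨integral_mul_sub_log_partitionFunction_le_informationGain hexp hρ₀ hρ₁ hρL hρρ,
      informationGain_eq_integral_mul_sub_log_partitionFunction_iff hexp hρ₀ hρ₁ hρL hρρ⟩

/-- Principle of minimal information gain: on a probability space `(Ω, 𝒜, μ₀)`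
with random vector `X : Ω → ℝⁿ` and `λ ∈ ℝⁿ` such that the partition function
`Z = ∫ exp⟨λ, X⟩ dμ₀` is finite and positive and `X·exp⟨λ, X⟩` is integrable,
the tilted density `ρ_λ = exp⟨λ, X⟩/Z` measuring the point
`x = ∫ X ρ_λ dμ₀` satisfies `∫ ρ_λ log ρ_λ dμ₀ = ⟨λ, x⟩ − log Z`, and every
probability density `ρ` measuring the same point `x` (with `ρ log ρ`
integrable) has information gain `∫ ρ log ρ dμ₀ ≥ ⟨λ, x⟩ − log Z`, with
equality iff `ρ = ρ_λ` almost everywhere. -/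
theorem minimal_information_gain {n : ℕ} {Ω : Type*} [MeasurableSpace Ω]
    (μ₀ : Measure Ω) [IsProbabilityMeasure μ₀]
    (X : Ω → EuclideanSpace ℝ (Fin n)) (hX : Measurable X)
    (l : EuclideanSpace ℝ (Fin n))
    (Z : ℝ) (hZ : Z = ∫ ω, Real.exp ⟪l, X ω⟫_ℝ ∂μ₀)
    (hZfin : Integrable (fun ω => Real.exp ⟪l, X ω⟫_ℝ) μ₀)
    (hZpos : 0 < Z)
    (hXexp : Integrable (fun ω => Real.exp ⟪l, X ω⟫_ℝ • X ω) μ₀)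
    (ρl : Ω → ℝ) (hρl : ρl = fun ω => Real.exp ⟪l, X ω⟫_ℝ / Z)
    (x : EuclideanSpace ℝ (Fin n)) (hx : x = ∫ ω, ρl ω • X ω ∂μ₀) :
    (∫ ω, ρl ω * Real.log (ρl ω) ∂μ₀) = ⟪l, x⟫_ℝ - Real.log Z ∧
      ∀ ρ : Ω → ℝ, Measurable ρ → (∀ ω, 0 ≤ ρ ω) →
        (∫ ω, ρ ω ∂μ₀) = 1 →
        Integrable (fun ω => ρ ω • X ω) μ₀ →
        (∫ ω, ρ ω • X ω ∂μ₀) = x →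
        Integrable (fun ω => ρ ω * Real.log (ρ ω)) μ₀ →
        (⟪l, x⟫_ℝ - Real.log Z ≤ ∫ ω, ρ ω * Real.log (ρ ω) ∂μ₀ ∧
          ((∫ ω, ρ ω * Real.log (ρ ω) ∂μ₀) = ⟪l, x⟫_ℝ - Real.log Z ↔
            ρ =ᵐ[μ₀] ρl)) := by
  subst hZ hρl
  obtain ⟨hgain, hmin⟩ :=
    minimal_information_gain_general μ₀ X (innerSL ℝ l) hZfin hXexp x hx
  exact ⟨hgain, fun ρ _ hρ₀ => hmin ρ (ae_of_all μ₀ hρ₀)⟩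
end

section
/- Let U ⊆ {(T, p) ∈ ℝ² : T ≠ 0, p ≠ 0} be open and let e, v : U → ℝ be differentiable functions satisfying the Lagrangian condition e_p + T·v_T + p·v_p = 0 on U. Then, with J₁ = e/T and J₂ = p·v/T, the identity p·∂_p(J₁) + T·∂_T(J₂) + p·∂_p(J₂) = 0 holds at every point of U. (This is the differential syzygy ∇₂(J₁) + ∇₁(J₂) + ∇₂(J₂) = 0 among the generators J₁, J₂ and the invariant derivations ∇₁ = T D_T, ∇₂ = p D_p.) -/
/-!
Write `T = q.1`, `p = q.2`. The coefficient `1 / T` in `J₁ = e / T` does not depend on `p`, and the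
coefficient `p / T` in `J₂ = (p / T) v` is homogeneous of degree zero, hence killed by the Euler
derivation `∇₁ + ∇₂ = T D_T + p D_p`. So both coefficients can be pulled out:
`∇₂ J₁ + (∇₁ + ∇₂) J₂ = (p / T) (e_p + T v_T + p v_p)`, and the last factor is `F = 0`.
-/

open Topology

section

variable {𝕜 : Type*} [NontriviallyNormedField 𝕜]

theorem fderiv_apply_eq_zero_of_eventually_const_on_line {E F : Type*}
    [NormedAddCommGroup E] [NormedSpace 𝕜 E] [NormedAddCommGroup F] [NormedSpace 𝕜 F]
    {f : E → F} {x w : E} (h : ∀ᶠ t in 𝓝 (0 : 𝕜), f (x + t • w) = f x) :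
    fderiv 𝕜 f x w = 0 := by
  by_cases hf : DifferentiableAt 𝕜 f x
  · rw [← hf.lineDeriv_eq_fderiv]
    exact ((hasDerivAt_const 0 (f x)).congr_of_eventuallyEq h).deriv
  · simp [fderiv_zero_of_not_differentiableAt hf]

theorem fderiv_mul_apply_of_eventually_const_on_line {E 𝔸 : Type*}
    [NormedAddCommGroup E] [NormedSpace 𝕜 E] [NormedRing 𝔸] [NormedAlgebra 𝕜 𝔸]
    {f g : E → 𝔸} {x w : E} (hf : DifferentiableAt 𝕜 f x) (hg : DifferentiableAt 𝕜 g x)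
    (h : ∀ᶠ t in 𝓝 (0 : 𝕜), f (x + t • w) = f x) :
    fderiv 𝕜 (fun y ↦ f y * g y) x w = f x * fderiv 𝕜 g x w := by
  simp [fderiv_fun_mul' hf hg, fderiv_apply_eq_zero_of_eventually_const_on_line h]

theorem map_eq_fst_smul_add_snd_smul {R M L : Type*} [Semiring R] [AddCommMonoid M] [Module R M]
    [FunLike L (R × R) M] [LinearMapClass L R (R × R) M] (φ : L) (q : R × R) :
    φ q = q.1 • φ (1, 0) + q.2 • φ (0, 1) := by
  rw [← map_smul, ← map_smul, ← map_add]
  simp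

theorem fderiv_div_fst_apply_mk_zero {E : Type*} [NormedAddCommGroup E] [NormedSpace 𝕜 E]
    {f : 𝕜 × E → 𝕜} {x : 𝕜 × E} (hx : x.1 ≠ 0) (hf : DifferentiableAt 𝕜 f x) (w : E) :
    fderiv 𝕜 (fun y ↦ f y / y.1) x (0, w) = fderiv 𝕜 f x (0, w) / x.1 := by
  have hinv : DifferentiableAt 𝕜 (fun y : 𝕜 × E ↦ y.1⁻¹) x := by fun_prop (disch := assumption)
  simp only [div_eq_inv_mul]
  exact fderiv_mul_apply_of_eventually_const_on_line hinv hf (.of_forall fun t ↦ by simp)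

variable {e v : 𝕜 × 𝕜 → 𝕜} {q : 𝕜 × 𝕜}

theorem fderiv_snd_mul_div_fst_apply_self (hq : q.1 ≠ 0) (hv : DifferentiableAt 𝕜 v q) :
    fderiv 𝕜 (fun x ↦ x.2 * v x / x.1) q q = q.2 / q.1 * fderiv 𝕜 v q q := by
  have hratio : DifferentiableAt 𝕜 (fun x : 𝕜 × 𝕜 ↦ x.2 / x.1) q := by
    fun_prop (disch := assumption)
  have hconst : ∀ᶠ t in 𝓝 (0 : 𝕜), (q + t • q).2 / (q + t • q).1 = q.2 / q.1 := by
    have hne : ∀ᶠ t in 𝓝 (0 : 𝕜), 1 + t ≠ 0 :=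
      ContinuousAt.eventually_ne (by fun_prop) (by simp)
    filter_upwards [hne] with t ht
    simpa [add_mul] using mul_div_mul_left q.2 q.1 ht
  simp only [mul_div_right_comm]
  exact fderiv_mul_apply_of_eventually_const_on_line hratio hv hconst

theorem syzygy_eq_div_mul_lagrangian (hq : q.1 ≠ 0)
    (he : DifferentiableAt 𝕜 e q) (hv : DifferentiableAt 𝕜 v q) :
    q.2 * fderiv 𝕜 (fun x ↦ e x / x.1) q (0, 1)
        + q.1 * fderiv 𝕜 (fun x ↦ x.2 * v x / x.1) q (1, 0)
        + q.2 * fderiv 𝕜 (fun x ↦ x.2 * v x / x.1) q (0, 1)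
      = q.2 / q.1 * (fderiv 𝕜 e q (0, 1) + q.1 * fderiv 𝕜 v q (1, 0)
        + q.2 * fderiv 𝕜 v q (0, 1)) := by
  have euler (f : 𝕜 × 𝕜 → 𝕜) :
      q.1 * fderiv 𝕜 f q (1, 0) + q.2 * fderiv 𝕜 f q (0, 1) = fderiv 𝕜 f q q :=
    (map_eq_fst_smul_add_snd_smul (fderiv 𝕜 f q) q).symm
  rw [add_assoc, add_assoc, euler, euler, fderiv_div_fst_apply_mk_zero hq he,
    fderiv_snd_mul_div_fst_apply_self hq hv]
  ring

theorem gas_syzygy_general (hq : q.1 ≠ 0)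
    (he : DifferentiableAt 𝕜 e q) (hv : DifferentiableAt 𝕜 v q)
    (hlag : fderiv 𝕜 e q (0, 1) + q.1 * fderiv 𝕜 v q (1, 0) + q.2 * fderiv 𝕜 v q (0, 1) = 0) :
    q.2 * fderiv 𝕜 (fun x ↦ e x / x.1) q (0, 1)
      + q.1 * fderiv 𝕜 (fun x ↦ x.2 * v x / x.1) q (1, 0)
      + q.2 * fderiv 𝕜 (fun x ↦ x.2 * v x / x.1) q (0, 1) = 0 := by
  rw [syzygy_eq_div_mul_lagrangian hq he hv, hlag, mul_zero]

end

/-- Let `U ⊆ {(T,p) : T ≠ 0, p ≠ 0}` be open and `e, v : U → ℝ` differentiable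
functions satisfying the Lagrangian condition `e_p + T v_T + p v_p = 0`.
Then with `J₁ = e/T`, `J₂ = p·v/T` the syzygy
`p ∂_p(J₁) + T ∂_T(J₂) + p ∂_p(J₂) = 0` holds on `U`, i.e.
`∇₂(J₁) + ∇₁(J₂) + ∇₂(J₂) = 0` for the invariant derivations
`∇₁ = T D_T`, `∇₂ = p D_p`. -/
theorem gas_syzygy (U : Set (ℝ × ℝ)) (hUopen : IsOpen U)
    (hU : ∀ q ∈ U, q.1 ≠ 0 ∧ q.2 ≠ 0)
    (e v : ℝ × ℝ → ℝ)
    (he : DifferentiableOn ℝ e U) (hv : DifferentiableOn ℝ v U)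
    (hlag : ∀ q ∈ U,
      fderiv ℝ e q (0, 1) + q.1 * fderiv ℝ v q (1, 0)
        + q.2 * fderiv ℝ v q (0, 1) = 0)
    (J₁ J₂ : ℝ × ℝ → ℝ)
    (hJ₁ : ∀ q, J₁ q = e q / q.1)
    (hJ₂ : ∀ q, J₂ q = q.2 * v q / q.1) :
    ∀ q ∈ U,
      q.2 * fderiv ℝ J₁ q (0, 1) + q.1 * fderiv ℝ J₂ q (1, 0)
        + q.2 * fderiv ℝ J₂ q (0, 1) = 0 := by
  intro q hq
  have hnhds : U ∈ 𝓝 q := hUopen.mem_nhds hq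
  obtain rfl : J₁ = fun x ↦ e x / x.1 := funext hJ₁
  obtain rfl : J₂ = fun x ↦ x.2 * v x / x.1 := funext hJ₂
  exact gas_syzygy_general (hU q hq).1 (he.differentiableAt hnhds) (hv.differentiableAt hnhds)
    (hlag q hq)
end

section
/- Let U = {(T, p) ∈ ℝ² : T > 0, p > 0} and let C ∈ ℝ. Smooth functions e, v : U → ℝ satisfy the system e_p + T·v_T + p·v_p = 0 and p·v_T + e_T = C on U if and only if there exist smooth functions f₁, f₂ : (0, ∞) → ℝ such that e(T, p) = f₁(p)·T − f₂′(p)·p² and v(T, p) = (C − f₁(p))·T/p + f₂′(p)·p + f₂(p) for all (T, p) ∈ U. (These are exactly the thermodynamic states of constant heat capacity C.) -/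
/-!
With the enthalpy `h = e + p v` the two equations become `h_T = C` and `h_p = v - T v_T`. The first
says `h = C T + g(p)`; the second is then the Euler equation `v - T v_T = g'(p)` in `T`, whose
solutions are `v = a(p) T + g'(p)`. The stated form comes from the substitution
`f₁ = C - p a`, `f₂ = g / p`, under which `g' = f₂' p + f₂`.
-/

section Calculus

variable {𝕜 E : Type*} [NormedAddCommGroup E]

section NontriviallyNormedField

variable [NontriviallyNormedField 𝕜] [NormedSpace 𝕜 E]

theorem hasDerivAt_slice_fst {F : 𝕜 × 𝕜 → E} {x y : 𝕜} (hF : DifferentiableAt 𝕜 F (x, y)) :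
    HasDerivAt (fun x' ↦ F (x', y)) (fderiv 𝕜 F (x, y) (1, 0)) x :=
  hF.hasFDerivAt.comp_hasDerivAt (f := (·, y)) x ((hasDerivAt_id x).prodMk (hasDerivAt_const x y))

theorem hasDerivAt_slice_snd {F : 𝕜 × 𝕜 → E} {x y : 𝕜} (hF : DifferentiableAt 𝕜 F (x, y)) :
    HasDerivAt (fun y' ↦ F (x, y')) (fderiv 𝕜 F (x, y) (0, 1)) y :=
  hF.hasFDerivAt.comp_hasDerivAt (f := (x, ·)) y ((hasDerivAt_const y x).prodMk (hasDerivAt_id y))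

theorem contDiffOn_slice_snd {n : WithTop ℕ∞} {F : 𝕜 × 𝕜 → E} {s t : Set 𝕜} {x : 𝕜}
    (hF : ContDiffOn 𝕜 n F (s ×ˢ t)) (hx : x ∈ s) : ContDiffOn 𝕜 n (fun y ↦ F (x, y)) t :=
  hF.comp (contDiff_prodMk_right x).contDiffOn fun _ hy ↦ ⟨hx, hy⟩

theorem contDiffOn_coeff_of_eq_smul_add {n : WithTop ℕ∞} {F : 𝕜 × 𝕜 → E} {s t : Set 𝕜}
    {a b : 𝕜 → E} (hF : ContDiffOn 𝕜 n F (s ×ˢ t)) (hs : s.Nontrivial)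
    (h : ∀ q ∈ s ×ˢ t, F q = q.1 • a q.2 + b q.2) :
    ContDiffOn 𝕜 n a t ∧ ContDiffOn 𝕜 n b t := by
  obtain ⟨x₀, hx₀, x₁, hx₁, hne⟩ := hs
  have hF₀ := contDiffOn_slice_snd hF hx₀
  have hF₁ := contDiffOn_slice_snd hF hx₁
  have ha : ContDiffOn 𝕜 n a t := by
    refine ((hF₁.sub hF₀).const_smul (x₁ - x₀)⁻¹).congr fun y hy ↦ ?_
    rw [eq_inv_smul_iff₀ (sub_ne_zero.2 hne.symm), h _ ⟨hx₁, hy⟩, h _ ⟨hx₀, hy⟩,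
      add_sub_add_right_eq_sub, sub_smul]
  exact ⟨ha, (hF₀.sub (ha.const_smul x₀)).congr fun y hy ↦
    eq_sub_of_add_eq' (h (x₀, y) ⟨hx₀, hy⟩).symm⟩

theorem contDiffOn_add_one_of_deriv {n : WithTop ℕ∞} {f : 𝕜 → E} {t : Set 𝕜} (hn : n ≠ 0)
    (ht : IsOpen t) (hf : ContDiffOn 𝕜 n f t) (hf' : ContDiffOn 𝕜 n (deriv f) t) :
    ContDiffOn 𝕜 (n + 1) f t :=
  (contDiffOn_succ_iff_deriv_of_isOpen ht).2
    ⟨hf.differentiableOn hn, fun hω ↦ (hω ▸ hf).analyticOn, hf'⟩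

end NontriviallyNormedField

variable [RCLike 𝕜] [NormedSpace 𝕜 E] {f : 𝕜 → E} {c : E} {s : Set 𝕜}

theorem exists_eq_smul_add_of_deriv_eq (hs : IsOpen s) (hs' : IsPreconnected s)
    (h : ∀ x ∈ s, HasDerivAt f c x) : ∃ b, ∀ x ∈ s, f x = x • c + b := by
  have h_lin : ∀ x, HasDerivAt (fun x : 𝕜 ↦ x • c) c x := fun x ↦ by
    simpa using (hasDerivAt_id x).smul_const c
  exact hs.exists_eq_add_of_deriv_eq hs'
    (fun x hx ↦ (h x hx).differentiableAt.differentiableWithinAt)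
    (fun x _ ↦ (h_lin x).differentiableAt.differentiableWithinAt)
    fun x hx ↦ (h x hx).deriv.trans (h_lin x).deriv.symm

theorem exists_eq_smul_add_of_sub_smul_deriv_eq (hs : IsOpen s) (hs' : IsPreconnected s)
    (h0 : (0 : 𝕜) ∉ s) (hf : ∀ x ∈ s, DifferentiableAt 𝕜 f x)
    (h : ∀ x ∈ s, f x - x • deriv f x = c) : ∃ a, ∀ x ∈ s, f x = x • a + c := by
  have hne : ∀ x ∈ s, x ≠ 0 := fun x hx ↦ ne_of_mem_of_not_mem hx h0
  have h_quot : ∀ x ∈ s, HasDerivAt (fun x ↦ x⁻¹ • (f x - c)) 0 x := fun x hx ↦ by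
    have hfc : f x - c = x • deriv f x := by rw [← h x hx, sub_sub_cancel]
    refine ((hasDerivAt_inv (hne x hx)).smul ((hf x hx).hasDerivAt.sub_const c)).congr_deriv ?_
    rw [hfc, smul_smul, ← add_smul]
    have h_cancel : x⁻¹ + -(x ^ 2)⁻¹ * x = 0 := by
      field_simp [hne x hx]
      ring
    rw [h_cancel, zero_smul]
  obtain ⟨a, ha⟩ := hs.exists_is_const_of_deriv_eq_zero hs'
    (fun x hx ↦ (h_quot x hx).differentiableAt.differentiableWithinAt)
    fun x hx ↦ (h_quot x hx).deriv
  exact ⟨a, fun x hx ↦ sub_eq_iff_eq_add.1 ((inv_smul_eq_iff₀ (hne x hx)).1 (ha x hx))⟩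

end Calculus

section States

variable {𝕜 : Type*}

/-- The state `(e, v)`, as a pair of functions of `q = (T, p)`, satisfies on `U` the Lagrangian
condition `e_p + T v_T + p v_p = 0` and has constant heat capacity `p v_T + e_T = C`. Partial
derivatives are encoded as values of `fderiv` at the basis vectors. -/
def IsStateOfHeatCapacity [NontriviallyNormedField 𝕜] (C : 𝕜) (e v : 𝕜 × 𝕜 → 𝕜)
    (U : Set (𝕜 × 𝕜)) : Prop :=
  ∀ q ∈ U,
    fderiv 𝕜 e q (0, 1) + q.1 * fderiv 𝕜 v q (1, 0) + q.2 * fderiv 𝕜 v q (0, 1) = 0 ∧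
    q.2 * fderiv 𝕜 v q (1, 0) + fderiv 𝕜 e q (1, 0) = C

/-- The enthalpy `e + p v` as a function of `q = (T, p)`; it is a potential for the system
`IsStateOfHeatCapacity`. -/
def enthalpy [Semiring 𝕜] (e v : 𝕜 × 𝕜 → 𝕜) (q : 𝕜 × 𝕜) : 𝕜 := e q + q.2 * v q

section NontriviallyNormedField

variable [NontriviallyNormedField 𝕜] {C : 𝕜} {e v : 𝕜 × 𝕜 → 𝕜} {U : Set (𝕜 × 𝕜)}

theorem hasFDerivAt_enthalpy {q : 𝕜 × 𝕜} (he : DifferentiableAt 𝕜 e q)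
    (hv : DifferentiableAt 𝕜 v q) :
    HasFDerivAt (enthalpy e v)
      (fderiv 𝕜 e q + (q.2 • fderiv 𝕜 v q + v q • ContinuousLinearMap.snd 𝕜 𝕜 𝕜)) q :=
  he.hasFDerivAt.add (hasFDerivAt_snd.mul hv.hasFDerivAt)

theorem contDiffOn_enthalpy {n : WithTop ℕ∞} (he : ContDiffOn 𝕜 n e U)
    (hv : ContDiffOn 𝕜 n v U) : ContDiffOn 𝕜 n (enthalpy e v) U :=
  he.add (contDiffOn_snd.mul hv)

theorem isStateOfHeatCapacity_iff_fderiv_enthalpy (he : ∀ q ∈ U, DifferentiableAt 𝕜 e q)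
    (hv : ∀ q ∈ U, DifferentiableAt 𝕜 v q) :
    IsStateOfHeatCapacity C e v U ↔ ∀ q ∈ U,
      fderiv 𝕜 (enthalpy e v) q (1, 0) = C ∧
      fderiv 𝕜 (enthalpy e v) q (0, 1) = v q - q.1 * fderiv 𝕜 v q (1, 0) := by
  refine forall₂_congr fun q hq ↦ ?_
  simp only [(hasFDerivAt_enthalpy (he q hq) (hv q hq)).fderiv, add_apply, smul_apply,
    ContinuousLinearMap.coe_snd', smul_eq_mul]
  grind

theorem isStateOfHeatCapacity_of_enthalpy_eq {s t : Set 𝕜} {a g : 𝕜 → 𝕜} (hs : IsOpen s)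
    (ht : IsOpen t) (he : ∀ q ∈ s ×ˢ t, DifferentiableAt 𝕜 e q)
    (hv : ∀ q ∈ s ×ˢ t, DifferentiableAt 𝕜 v q)
    (h : ∀ q ∈ s ×ˢ t,
      enthalpy e v q = q.1 * C + g q.2 ∧ v q = q.1 * a q.2 + deriv g q.2) :
    IsStateOfHeatCapacity C e v (s ×ˢ t) := by
  rw [isStateOfHeatCapacity_iff_fderiv_enthalpy he hv]
  rintro ⟨T, p⟩ ⟨hT : T ∈ s, hp : p ∈ t⟩
  have hv' := hv (T, p) ⟨hT, hp⟩
  have hh := (hasFDerivAt_enthalpy (he (T, p) ⟨hT, hp⟩) hv').differentiableAt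
  have h_fst : (fun T' ↦ enthalpy e v (T', p)) =ᶠ[nhds T] fun T' ↦ T' * C + g p :=
    Filter.mem_of_superset (hs.mem_nhds hT) fun T' hT' ↦ (h (T', p) ⟨hT', hp⟩).1
  have h_snd : (fun p' ↦ enthalpy e v (T, p')) =ᶠ[nhds p] fun p' ↦ T * C + g p' :=
    Filter.mem_of_superset (ht.mem_nhds hp) fun p' hp' ↦ (h (T, p') ⟨hT, hp'⟩).1
  have hv_fst : (fun T' ↦ v (T', p)) =ᶠ[nhds T] fun T' ↦ T' * a p + deriv g p :=
    Filter.mem_of_superset (hs.mem_nhds hT) fun T' hT' ↦ (h (T', p) ⟨hT', hp⟩).2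
  rw [← (hasDerivAt_slice_fst hh).deriv, ← (hasDerivAt_slice_snd hh).deriv,
    ← (hasDerivAt_slice_fst hv').deriv, h_fst.deriv_eq, h_snd.deriv_eq, hv_fst.deriv_eq,
    (h (T, p) ⟨hT, hp⟩).2]
  simp

theorem contDiffOn_of_enthalpy_eq {n : WithTop ℕ∞} {s t : Set 𝕜} {a g : 𝕜 → 𝕜}
    (hn : n ≠ 0) (hs : s.Nontrivial) (ht : IsOpen t)
    (he : ContDiffOn 𝕜 n e (s ×ˢ t)) (hv : ContDiffOn 𝕜 n v (s ×ˢ t))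
    (h : ∀ q ∈ s ×ˢ t,
      enthalpy e v q = q.1 * C + g q.2 ∧ v q = q.1 * a q.2 + deriv g q.2) :
    ContDiffOn 𝕜 n a t ∧ ContDiffOn 𝕜 (n + 1) g t := by
  have hg := (contDiffOn_coeff_of_eq_smul_add (a := fun _ ↦ C) (contDiffOn_enthalpy he hv) hs
    fun q hq ↦ (h q hq).1).2
  obtain ⟨ha, hg'⟩ := contDiffOn_coeff_of_eq_smul_add hv hs fun q hq ↦ (h q hq).2
  -- `g` gains one derivative because `deriv g` is itself a coefficient of `v`.
  exact ⟨ha, contDiffOn_add_one_of_deriv hn ht hg hg'⟩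

theorem state_eq_iff_enthalpy_eq {f₁ f₂ : 𝕜 → 𝕜} {q : 𝕜 × 𝕜} (hp : q.2 ≠ 0)
    (hf₂ : DifferentiableAt 𝕜 f₂ q.2) :
    (e q = f₁ q.2 * q.1 - deriv f₂ q.2 * q.2 ^ 2 ∧
      v q = (C - f₁ q.2) * q.1 / q.2 + deriv f₂ q.2 * q.2 + f₂ q.2) ↔
    enthalpy e v q = q.1 * C + q.2 * f₂ q.2 ∧
      v q = q.1 * ((C - f₁ q.2) / q.2) + deriv (fun p ↦ p * f₂ p) q.2 := by
  have h_deriv : deriv (fun p ↦ p * f₂ p) q.2 = 1 * f₂ q.2 + q.2 * deriv f₂ q.2 :=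
    ((hasDerivAt_id q.2).mul hf₂.hasDerivAt).deriv
  have hv_eq : (C - f₁ q.2) * q.1 / q.2 + deriv f₂ q.2 * q.2 + f₂ q.2 =
      q.1 * ((C - f₁ q.2) / q.2) + (1 * f₂ q.2 + q.2 * deriv f₂ q.2) := by ring
  rw [h_deriv, hv_eq, enthalpy]
  refine and_congr_left fun hv ↦ ?_
  have hpv : q.2 * v q = q.1 * (C - f₁ q.2) + q.2 * (f₂ q.2 + q.2 * deriv f₂ q.2) := by
    rw [hv]
    field_simp
  rw [hpv, ← eq_sub_iff_add_eq]
  ring_nf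

end NontriviallyNormedField

variable [RCLike 𝕜] {C : 𝕜} {e v : 𝕜 × 𝕜 → 𝕜} {s t : Set 𝕜}

theorem IsStateOfHeatCapacity.exists_enthalpy_eq (h : IsStateOfHeatCapacity C e v (s ×ˢ t))
    (hs : IsOpen s) (hs' : IsPreconnected s) (hs0 : (0 : 𝕜) ∉ s) (ht : IsOpen t)
    (he : ∀ q ∈ s ×ˢ t, DifferentiableAt 𝕜 e q) (hv : ∀ q ∈ s ×ˢ t, DifferentiableAt 𝕜 v q) :
    ∃ a g : 𝕜 → 𝕜, ∀ q ∈ s ×ˢ t,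
      enthalpy e v q = q.1 * C + g q.2 ∧ v q = q.1 * a q.2 + deriv g q.2 := by
  rw [isStateOfHeatCapacity_iff_fderiv_enthalpy he hv] at h
  have hh : ∀ q ∈ s ×ˢ t, DifferentiableAt 𝕜 (enthalpy e v) q := fun q hq ↦
    (hasFDerivAt_enthalpy (he q hq) (hv q hq)).differentiableAt
  have h_enthalpy : ∀ p ∈ t, ∃ b, ∀ T ∈ s, enthalpy e v (T, p) = T * C + b := fun p hp ↦
    exists_eq_smul_add_of_deriv_eq hs hs' fun T hT ↦
      (h (T, p) ⟨hT, hp⟩).1 ▸ hasDerivAt_slice_fst (hh (T, p) ⟨hT, hp⟩)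
  choose! g hg using h_enthalpy
  have h_deriv : ∀ T ∈ s, ∀ p ∈ t, deriv g p = v (T, p) - T * fderiv 𝕜 v (T, p) (1, 0) :=
    fun T hT p hp ↦ by
      have h_snd : (fun p' ↦ enthalpy e v (T, p')) =ᶠ[nhds p] fun p' ↦ T * C + g p' :=
        Filter.mem_of_superset (ht.mem_nhds hp) fun p' hp' ↦ hg p' hp' T hT
      rw [← (h (T, p) ⟨hT, hp⟩).2, ← (hasDerivAt_slice_snd (hh _ ⟨hT, hp⟩)).deriv,
        h_snd.deriv_eq, deriv_const_add]
  have h_volume : ∀ p ∈ t, ∃ a, ∀ T ∈ s, v (T, p) = T * a + deriv g p := fun p hp ↦ by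
    have h_fst := fun T hT ↦ hasDerivAt_slice_fst (hv (T, p) ⟨hT, hp⟩)
    refine exists_eq_smul_add_of_sub_smul_deriv_eq hs hs' hs0
      (fun T hT ↦ (h_fst T hT).differentiableAt) fun T hT ↦ ?_
    rw [(h_fst T hT).deriv, h_deriv T hT p hp, smul_eq_mul]
  choose! a ha using h_volume
  exact ⟨a, g, fun q hq ↦ ⟨hg q.2 hq.2 q.1 hq.1, ha q.2 hq.2 q.1 hq.1⟩⟩

theorem isStateOfHeatCapacity_iff_exists_enthalpy_eq {n : WithTop ℕ∞} (hn : n ≠ 0)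
    (hs : IsOpen s) (hs' : IsConnected s) (hs0 : (0 : 𝕜) ∉ s) (ht : IsOpen t)
    (he : ContDiffOn 𝕜 n e (s ×ˢ t)) (hv : ContDiffOn 𝕜 n v (s ×ˢ t)) :
    IsStateOfHeatCapacity C e v (s ×ˢ t) ↔
      ∃ a g : 𝕜 → 𝕜, ContDiffOn 𝕜 n a t ∧ ContDiffOn 𝕜 (n + 1) g t ∧ ∀ q ∈ s ×ˢ t,
        enthalpy e v q = q.1 * C + g q.2 ∧ v q = q.1 * a q.2 + deriv g q.2 := by
  have he' : ∀ q ∈ s ×ˢ t, DifferentiableAt 𝕜 e q := fun q hq ↦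
    (he.differentiableOn hn).differentiableAt ((hs.prod ht).mem_nhds hq)
  have hv' : ∀ q ∈ s ×ˢ t, DifferentiableAt 𝕜 v q := fun q hq ↦
    (hv.differentiableOn hn).differentiableAt ((hs.prod ht).mem_nhds hq)
  constructor
  · intro h
    obtain ⟨T, hT⟩ := hs'.nonempty
    have hs_nontrivial : s.Nontrivial := (infinite_of_mem_nhds T (hs.mem_nhds hT)).nontrivial
    obtain ⟨a, g, hag⟩ := h.exists_enthalpy_eq hs hs'.isPreconnected hs0 ht he' hv'
    obtain ⟨ha, hg⟩ := contDiffOn_of_enthalpy_eq hn hs_nontrivial ht he hv hag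
    exact ⟨a, g, ha, hg, hag⟩
  · rintro ⟨a, g, -, -, hag⟩
    exact isStateOfHeatCapacity_of_enthalpy_eq hs ht he' hv' hag

theorem constant_heat_capacity_states_general {n : WithTop ℕ∞} (hn : n ≠ 0) (hs : IsOpen s)
    (hs' : IsConnected s) (hs0 : (0 : 𝕜) ∉ s) (ht : IsOpen t) (ht0 : (0 : 𝕜) ∉ t)
    (he : ContDiffOn 𝕜 n e (s ×ˢ t)) (hv : ContDiffOn 𝕜 n v (s ×ˢ t)) :
    IsStateOfHeatCapacity C e v (s ×ˢ t) ↔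
      ∃ f₁ f₂ : 𝕜 → 𝕜,
        ContDiffOn 𝕜 n f₁ t ∧ ContDiffOn 𝕜 (n + 1) f₂ t ∧
        ∀ q ∈ s ×ˢ t,
          e q = f₁ q.2 * q.1 - deriv f₂ q.2 * q.2 ^ 2 ∧
          v q = (C - f₁ q.2) * q.1 / q.2 + deriv f₂ q.2 * q.2 + f₂ q.2 := by
  have hne : ∀ p ∈ t, p ≠ 0 := fun p hp ↦ ne_of_mem_of_not_mem hp ht0
  have hdiff : ∀ {f : 𝕜 → 𝕜}, ContDiffOn 𝕜 (n + 1) f t → ∀ p ∈ t, DifferentiableAt 𝕜 f p :=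
    fun hf p hp ↦ (hf.differentiableOn (by simp)).differentiableAt (ht.mem_nhds hp)
  rw [isStateOfHeatCapacity_iff_exists_enthalpy_eq hn hs hs' hs0 ht he hv]
  constructor
  · rintro ⟨a, g, ha, hg, hag⟩
    have hf₂ : ContDiffOn 𝕜 (n + 1) (fun p ↦ g p / p) t := hg.div contDiffOn_id hne
    refine ⟨fun p ↦ C - p * a p, _, contDiffOn_const.sub (contDiffOn_id.mul ha), hf₂,
      fun q hq ↦ ?_⟩
    have hg_eq : (fun p ↦ p * (g p / p)) =ᶠ[nhds q.2] g :=
      Filter.mem_of_superset (ht.mem_nhds hq.2) fun p hp ↦ mul_div_cancel₀ (g p) (hne p hp)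
    refine (state_eq_iff_enthalpy_eq (f₁ := fun p ↦ C - p * a p) (hne q.2 hq.2)
      (hdiff hf₂ q.2 hq.2)).2 ?_
    rw [hg_eq.deriv_eq, hg_eq.eq_of_nhds, sub_sub_cancel, mul_div_cancel_left₀ _ (hne q.2 hq.2)]
    exact hag q hq
  · rintro ⟨f₁, f₂, hf₁, hf₂, hf⟩
    exact ⟨fun p ↦ (C - f₁ p) / p, fun p ↦ p * f₂ p,
      (contDiffOn_const.sub hf₁).div contDiffOn_id hne, contDiffOn_id.mul hf₂,
      fun q hq ↦ (state_eq_iff_enthalpy_eq (hne q.2 hq.2) (hdiff hf₂ q.2 hq.2)).1 (hf q hq)⟩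

end States

/-- Let `U = {(T,p) : T > 0, p > 0}` and `C ∈ ℝ`.  Smooth functions
`e, v : U → ℝ` satisfy `e_p + T v_T + p v_p = 0` and `p v_T + e_T = C` on `U`
if and only if there are smooth functions `f₁, f₂ : (0,∞) → ℝ` with
`e = f₁(p) T − f₂′(p) p²` and `v = (C − f₁(p)) T/p + f₂′(p) p + f₂(p)`.
These are exactly the thermodynamic states of constant heat capacity `C`. -/
theorem constant_heat_capacity_states (C : ℝ) (e v : ℝ × ℝ → ℝ)
    (he : ContDiffOn ℝ (⊤ : ℕ∞) e (Set.Ioi (0:ℝ) ×ˢ Set.Ioi (0:ℝ)))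
    (hv : ContDiffOn ℝ (⊤ : ℕ∞) v (Set.Ioi (0:ℝ) ×ˢ Set.Ioi (0:ℝ))) :
    (∀ q ∈ Set.Ioi (0:ℝ) ×ˢ Set.Ioi (0:ℝ),
        fderiv ℝ e q (0, 1) + q.1 * fderiv ℝ v q (1, 0)
          + q.2 * fderiv ℝ v q (0, 1) = 0 ∧
        q.2 * fderiv ℝ v q (1, 0) + fderiv ℝ e q (1, 0) = C) ↔
      ∃ f₁ f₂ : ℝ → ℝ,
        ContDiffOn ℝ (⊤ : ℕ∞) f₁ (Set.Ioi 0) ∧ ContDiffOn ℝ (⊤ : ℕ∞) f₂ (Set.Ioi 0) ∧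
        ∀ q ∈ Set.Ioi (0:ℝ) ×ˢ Set.Ioi (0:ℝ),
          e q = f₁ q.2 * q.1 - deriv f₂ q.2 * q.2 ^ 2 ∧
          v q = (C - f₁ q.2) * q.1 / q.2 + deriv f₂ q.2 * q.2 + f₂ q.2 :=
  constant_heat_capacity_states_general (by simp) isOpen_Ioi isConnected_Ioi Set.self_notMem_Ioi
    isOpen_Ioi Set.self_notMem_Ioi he hv
end

section
/- Let U = {(T, p) ∈ ℝ² : T > 0, p > 0}. Differentiable functions e, v : U → ℝ satisfy the five equations T·v_T + p·v_p + e_p = 0, e = T·e_T, e_p = 0, v = T·v_T, and v = −p·v_p on U if and only if there exist constants C₁, C₂ ∈ ℝ such that e(T, p) = C₁·T and v(T, p) = C₂·T/p for all (T, p) ∈ U, i.e. if and only if the state is an ideal gas (e = C₁T and pv = C₂T). (Thus the ideal gases are exactly the Lagrangian submanifolds invariant under the two-dimensional group generated by e∂_e + T∂_T + p∂_p and v∂_v − p∂_p.) -/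
/-!
The equations prescribe the logarithmic differentials of `e` and `v` to be those of `T` and `T / p`.
Two solutions of the same equation `dφ = φ θ` have a constant quotient on a connected domain, the
quotient having zero differential. The two equations for `v` give `T v_T + p v_p = 0`, which
together with `e_p = 0` is the Lagrangian condition.
-/

variable {𝕜 E F : Type*} [NontriviallyNormedField 𝕜] [NormedAddCommGroup E] [NormedSpace 𝕜 E]
  [NormedAddCommGroup F] [NormedSpace 𝕜 F]

theorem hasFDerivAt_zero_inv_smul {f : E → F} {g : E → 𝕜} {θ : E →L[𝕜] 𝕜} {x : E}
    (hf : HasFDerivAt f (θ.smulRight (f x)) x) (hg : HasFDerivAt g (g x • θ) x) (hgx : g x ≠ 0) :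
    HasFDerivAt (fun y => (g y)⁻¹ • f y) (0 : E →L[𝕜] F) x := by
  have hinv : HasFDerivAt (fun y => (g y)⁻¹) (-(g x)⁻¹ • θ) x := by
    convert! (hasDerivAt_inv hgx).comp_hasFDerivAt x hg using 1
    rw [smul_smul]
    congr 1
    field
  convert! hinv.fun_smul hf using 1
  ext w
  simp [smul_smul]

theorem forall_fderiv_eq_smulRight_iff_exists_eq_smul [IsRCLikeNormedField 𝕜] {s : Set E}
    {f : E → F} {g : E → 𝕜} {θ : E → E →L[𝕜] 𝕜} (hs : IsOpen s) (hs' : IsPreconnected s)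
    (hf : DifferentiableOn 𝕜 f s) (hg : ∀ x ∈ s, HasFDerivAt g (g x • θ x) x)
    (hg₀ : ∀ x ∈ s, g x ≠ 0) :
    (∀ x ∈ s, fderiv 𝕜 f x = (θ x).smulRight (f x)) ↔ ∃ c, ∀ x ∈ s, f x = g x • c := by
  constructor
  · intro hfθ
    have hquot : ∀ x ∈ s, HasFDerivAt (fun y => (g y)⁻¹ • f y) (0 : E →L[𝕜] F) x := fun x hx =>
      hasFDerivAt_zero_inv_smul
        (hfθ x hx ▸ (hf.differentiableAt (hs.mem_nhds hx)).hasFDerivAt) (hg x hx) (hg₀ x hx)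
    let : RCLike 𝕜 := IsRCLikeNormedField.rclike 𝕜
    let : NormedSpace ℝ E := .restrictScalars ℝ 𝕜 E
    obtain ⟨c, hc⟩ := hs.exists_is_const_of_fderiv_eq_zero hs'
      (fun x hx => (hquot x hx).differentiableAt.differentiableWithinAt)
      (fun x hx => (hquot x hx).fderiv)
    exact ⟨c, fun x hx => (inv_smul_eq_iff₀ (hg₀ x hx)).mp (hc x hx)⟩
  · rintro ⟨c, hc⟩ x hx
    have hfg : f =ᶠ[nhds x] fun y => g y • c := Filter.eventually_of_mem (hs.mem_nhds hx) hc
    rw [hfg.fderiv_eq, ((hg x hx).smul_const c).fderiv, hc x hx]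
    ext w
    simp [smul_smul, mul_comm]

/-- The Euler equations `x f_x = m f` and `y f_y = n f` at the point `q = (x, y)`: the
infinitesimal form of bihomogeneity of bidegree `(m, n)`. Where `f` is not differentiable, `fderiv`
is `0` and the equations are meaningless. -/
def SatisfiesEulerAt (m n : ℤ) (f : 𝕜 × 𝕜 → F) (q : 𝕜 × 𝕜) : Prop :=
  q.1 • fderiv 𝕜 f q (1, 0) = (m : 𝕜) • f q ∧ q.2 • fderiv 𝕜 f q (0, 1) = (n : 𝕜) • f q

/-- The logarithmic differential `m dx / x + n dy / y` of the monomial `x ^ m * y ^ n`, whose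
multiples are the solutions of the Euler equations; it is meant for points off the axes. -/
def logDifferential (m n : ℤ) (q : 𝕜 × 𝕜) : 𝕜 × 𝕜 →L[𝕜] 𝕜 :=
  (m / q.1 : 𝕜) • ContinuousLinearMap.fst 𝕜 𝕜 𝕜 + (n / q.2 : 𝕜) • ContinuousLinearMap.snd 𝕜 𝕜 𝕜

theorem hasFDerivAt_zpow_mul_zpow (m n : ℤ) {q : 𝕜 × 𝕜} (hx : q.1 ≠ 0) (hy : q.2 ≠ 0) :
    HasFDerivAt (fun r : 𝕜 × 𝕜 => r.1 ^ m * r.2 ^ n)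
      ((q.1 ^ m * q.2 ^ n) • logDifferential m n q) q := by
  have hxm := (hasDerivAt_zpow m q.1 (.inl hx)).comp_hasFDerivAt q
    (hasFDerivAt_fst (𝕜 := 𝕜) (F := 𝕜))
  have hyn := (hasDerivAt_zpow n q.2 (.inl hy)).comp_hasFDerivAt q
    (hasFDerivAt_snd (𝕜 := 𝕜) (E := 𝕜))
  convert! hxm.mul hyn using 1
  ext <;> simp [logDifferential, zpow_sub_one₀, hx, hy] <;> ring

theorem satisfiesEulerAt_iff_fderiv_eq {m n : ℤ} {f : 𝕜 × 𝕜 → F} {q : 𝕜 × 𝕜}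
    (hx : q.1 ≠ 0) (hy : q.2 ≠ 0) :
    SatisfiesEulerAt m n f q ↔ fderiv 𝕜 f q = (logDifferential m n q).smulRight (f q) := by
  simp [SatisfiesEulerAt, logDifferential, ContinuousLinearMap.prod_ext_iff,
    ContinuousLinearMap.ext_ring_iff, div_eq_inv_mul, mul_smul, eq_inv_smul_iff₀, hx, hy]

theorem forall_satisfiesEulerAt_iff_exists_eq_zpow_mul_zpow_smul [IsRCLikeNormedField 𝕜]
    {s : Set (𝕜 × 𝕜)} (m n : ℤ) {f : 𝕜 × 𝕜 → F} (hs : IsOpen s) (hs' : IsPreconnected s)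
    (hs₀ : s ⊆ {0}ᶜ ×ˢ {0}ᶜ) (hf : DifferentiableOn 𝕜 f s) :
    (∀ q ∈ s, SatisfiesEulerAt m n f q) ↔ ∃ c, ∀ q ∈ s, f q = (q.1 ^ m * q.2 ^ n) • c := by
  rw [← forall_fderiv_eq_smulRight_iff_exists_eq_smul hs hs' hf
    (fun q hq => hasFDerivAt_zpow_mul_zpow m n (hs₀ hq).1 (hs₀ hq).2)
    (fun q hq => mul_ne_zero (zpow_ne_zero m (hs₀ hq).1) (zpow_ne_zero n (hs₀ hq).2))]
  exact forall₂_congr fun q hq => satisfiesEulerAt_iff_fderiv_eq (hs₀ hq).1 (hs₀ hq).2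

theorem lagrangian_and_invariant_iff_satisfiesEulerAt {e v : 𝕜 × 𝕜 → F} {q : 𝕜 × 𝕜}
    (hp : q.2 ≠ 0) :
    (q.1 • fderiv 𝕜 v q (1, 0) + q.2 • fderiv 𝕜 v q (0, 1) + fderiv 𝕜 e q (0, 1) = 0 ∧
        e q = q.1 • fderiv 𝕜 e q (1, 0) ∧
        fderiv 𝕜 e q (0, 1) = 0 ∧
        v q = q.1 • fderiv 𝕜 v q (1, 0) ∧
        v q = -(q.2 • fderiv 𝕜 v q (0, 1))) ↔
      SatisfiesEulerAt 1 0 e q ∧ SatisfiesEulerAt 1 (-1) v q := by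
  simp only [SatisfiesEulerAt, Int.cast_one, Int.cast_zero, Int.cast_neg, one_smul, zero_smul,
    neg_smul, smul_eq_zero_iff_right hp]
  constructor
  · rintro ⟨-, he_T, he_p, hv_T, hv_p⟩
    exact ⟨⟨he_T.symm, he_p⟩, hv_T.symm, neg_eq_iff_eq_neg.mp hv_p.symm⟩
  · rintro ⟨⟨he_T, he_p⟩, hv_T, hv_p⟩
    refine ⟨?_, he_T.symm, he_p, hv_T.symm, ?_⟩
    · rw [hv_T, hv_p, he_p, add_neg_cancel, add_zero]
    · rw [hv_p, neg_neg]

theorem ideal_gases_are_invariant_states_general [IsRCLikeNormedField 𝕜]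
    {s : Set (𝕜 × 𝕜)} {e v : 𝕜 × 𝕜 → F}
    (hs : IsOpen s) (hs' : IsPreconnected s) (hs₀ : s ⊆ {0}ᶜ ×ˢ {0}ᶜ)
    (he : DifferentiableOn 𝕜 e s) (hv : DifferentiableOn 𝕜 v s) :
    (∀ q ∈ s,
        q.1 • fderiv 𝕜 v q (1, 0) + q.2 • fderiv 𝕜 v q (0, 1) + fderiv 𝕜 e q (0, 1) = 0 ∧
        e q = q.1 • fderiv 𝕜 e q (1, 0) ∧
        fderiv 𝕜 e q (0, 1) = 0 ∧
        v q = q.1 • fderiv 𝕜 v q (1, 0) ∧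
        v q = -(q.2 • fderiv 𝕜 v q (0, 1))) ↔
      ∃ C₁ C₂ : F, ∀ q ∈ s, e q = q.1 • C₁ ∧ v q = (q.1 / q.2) • C₂ := by
  rw [forall₂_congr fun q hq => lagrangian_and_invariant_iff_satisfiesEulerAt (hs₀ hq).2]
  simp only [forall_and, exists_and_left, exists_and_right]
  rw [forall_satisfiesEulerAt_iff_exists_eq_zpow_mul_zpow_smul 1 0 hs hs' hs₀ he,
    forall_satisfiesEulerAt_iff_exists_eq_zpow_mul_zpow_smul 1 (-1) hs hs' hs₀ hv]
  simp only [zpow_one, zpow_zero, mul_one, zpow_neg_one, div_eq_mul_inv]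

/-- Let `U = {(T,p) : T > 0, p > 0}`.  Differentiable functions `e, v : U → ℝ`
satisfy the five equations `T v_T + p v_p + e_p = 0`, `e = T e_T`, `e_p = 0`,
`v = T v_T`, `v = −p v_p` on `U` if and only if there are constants
`C₁, C₂ ∈ ℝ` with `e = C₁ T` and `v = C₂ T/p`, i.e. iff the state is an ideal
gas (`e = C₁T`, `pv = C₂T`).  Thus ideal gases are exactly the Lagrangian
submanifolds invariant under the two-dimensional group generated by
`e∂_e + T∂_T + p∂_p` and `v∂_v − p∂_p`. -/
theorem ideal_gases_are_invariant_states (e v : ℝ × ℝ → ℝ)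
    (he : DifferentiableOn ℝ e (Set.Ioi (0:ℝ) ×ˢ Set.Ioi (0:ℝ)))
    (hv : DifferentiableOn ℝ v (Set.Ioi (0:ℝ) ×ˢ Set.Ioi (0:ℝ))) :
    (∀ q ∈ Set.Ioi (0:ℝ) ×ˢ Set.Ioi (0:ℝ),
        q.1 * fderiv ℝ v q (1, 0) + q.2 * fderiv ℝ v q (0, 1)
          + fderiv ℝ e q (0, 1) = 0 ∧
        e q = q.1 * fderiv ℝ e q (1, 0) ∧
        fderiv ℝ e q (0, 1) = 0 ∧
        v q = q.1 * fderiv ℝ v q (1, 0) ∧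
        v q = -(q.2 * fderiv ℝ v q (0, 1))) ↔
      ∃ C₁ C₂ : ℝ, ∀ q ∈ Set.Ioi (0:ℝ) ×ˢ Set.Ioi (0:ℝ),
        e q = C₁ * q.1 ∧ v q = C₂ * q.1 / q.2 := by
  simpa [mul_comm, mul_div_assoc] using ideal_gases_are_invariant_states_general
    (isOpen_Ioi.prod isOpen_Ioi) ((convex_Ioi 0).prod (convex_Ioi 0)).isPreconnected
    (Set.prod_mono (fun _ => ne_of_gt) (fun _ => ne_of_gt)) he hv
end

section
/- Let U ⊆ ℝ² be open and e, v : U → ℝ differentiable, and let I₂(e, v)(T, p) = p·v_T(T, p) + e_T(T, p) denote the heat capacity. Then the heat capacity is invariant under the following transformations of states: (a) for c ∈ ℝ, with ẽ(T, p) = e(T, p−c) − c·v(T, p−c) and ṽ(T, p) = v(T, p−c), one has I₂(ẽ, ṽ)(T, p) = I₂(e, v)(T, p−c); (b) for t > 0, with ẽ(T, p) = t·e(T/t, p/t) and ṽ(T, p) = v(T/t, p/t), one has I₂(ẽ, ṽ)(T, p) = I₂(e, v)(T/t, p/t); (c) for s > 0, with ẽ(T, p) = e(T, s·p) and ṽ(T,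 p) = s·v(T, s·p), one has I₂(ẽ, ṽ)(T, p) = I₂(e, v)(T, s·p). (These transformations are the actions on states of the affine transformations (e, v) ↦ (e − c·v, v), (e, v) ↦ (t·e, v), and (e, v) ↦ (e, s·v) of V, showing that the heat capacity is a differential invariant of the Aff(V)-action.) -/
/-- The heat capacity (at constant pressure) `I₂ = p·v_T + e_T` of a state
given by functions `e, v` of `(T, p)`. -/
noncomputable def heatCapacity (e v : ℝ × ℝ → ℝ) (q : ℝ × ℝ) : ℝ :=
  q.2 * fderiv ℝ v q (1, 0) + fderiv ℝ e q (1, 0)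

/-!
Along a state, the heat capacity is the covector `(1, p)`, a multiple of `λ`, applied to
`∂(e, v)/∂T`. The action on `λ` is dual to the action on `(e, v)`, and at fixed pressure the
induced change of coordinates only rescales the temperature, by exactly the factor which relates
the two normalisations of `λ`.
-/

/-- The change of the coordinates `(T, p)` induced by an affine transformation of `V` with linear
part `A`. It sends the coordinates of the transformed state to those of the original one: since
`λ₁ de + λ₂ dv` is preserved, `λ` is pulled back along `A`, and here `λ = -(1, p) / T`. -/
noncomputable def inducedCoords (A : Matrix (Fin 2) (Fin 2) ℝ) (q : ℝ × ℝ) : ℝ × ℝ :=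
  (q.1 / (A 0 0 + A 1 0 * q.2), (A 0 1 + A 1 1 * q.2) / (A 0 0 + A 1 0 * q.2))

section InducedCoords

variable {A : Matrix (Fin 2) (Fin 2) ℝ} {q : ℝ × ℝ}

lemma differentiableAt_inducedCoords (hq : A 0 0 + A 1 0 * q.2 ≠ 0) :
    DifferentiableAt ℝ (inducedCoords A) q := by
  unfold inducedCoords
  fun_prop (disch := exact hq)

lemma fderiv_inducedCoords_temperature (hq : A 0 0 + A 1 0 * q.2 ≠ 0) :
    fderiv ℝ (inducedCoords A) q (1, 0) = (A 0 0 + A 1 0 * q.2)⁻¹ • (1, 0) := by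
  rw [← (differentiableAt_inducedCoords hq).lineDeriv_eq_fderiv]
  have affine_in_temperature (t : ℝ) : inducedCoords A (q + t • (1, 0)) =
      inducedCoords A q + t • (A 0 0 + A 1 0 * q.2)⁻¹ • (1, 0) := by
    ext <;> simp [inducedCoords, add_mul, div_eq_mul_inv]
  simp only [lineDeriv, affine_in_temperature]
  exact (((hasDerivAt_id (0 : ℝ)).smul_const _).const_add _).deriv.trans (one_smul ℝ _)

lemma fderiv_comp_inducedCoords_temperature {E : Type*} [NormedAddCommGroup E] [NormedSpace ℝ E]
    {f : ℝ × ℝ → E} (hq : A 0 0 + A 1 0 * q.2 ≠ 0)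
    (hf : DifferentiableAt ℝ f (inducedCoords A q)) :
    fderiv ℝ (fun x ↦ f (inducedCoords A x)) q (1, 0) =
      (A 0 0 + A 1 0 * q.2)⁻¹ • fderiv ℝ f (inducedCoords A q) (1, 0) := by
  rw [fderiv_fun_comp q hf (differentiableAt_inducedCoords hq), ContinuousLinearMap.comp_apply,
    fderiv_inducedCoords_temperature hq, map_smul]

end InducedCoords

theorem heat_capacity_invariant_general (A : Matrix (Fin 2) (Fin 2) ℝ) (b : ℝ × ℝ)
    {e v : ℝ × ℝ → ℝ} {q : ℝ × ℝ} (hq : A 0 0 + A 1 0 * q.2 ≠ 0)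
    (he : DifferentiableAt ℝ e (inducedCoords A q))
    (hv : DifferentiableAt ℝ v (inducedCoords A q)) :
    heatCapacity
        (fun x ↦ A 0 0 * e (inducedCoords A x) + A 0 1 * v (inducedCoords A x) + b.1)
        (fun x ↦ A 1 0 * e (inducedCoords A x) + A 1 1 * v (inducedCoords A x) + b.2) q =
      heatCapacity e v (inducedCoords A q) := by
  have fderiv_combination (α β γ : ℝ) :
      fderiv ℝ (fun x ↦ α * e (inducedCoords A x) + β * v (inducedCoords A x) + γ) q (1, 0) =
        (A 0 0 + A 1 0 * q.2)⁻¹ * (α * fderiv ℝ e (inducedCoords A q) (1, 0) +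
          β * fderiv ℝ v (inducedCoords A q) (1, 0)) := by
    have hf : DifferentiableAt ℝ (fun y ↦ α * e y + β * v y + γ) (inducedCoords A q) :=
      ((he.const_mul α).add (hv.const_mul β)).add_const γ
    rw [fderiv_comp_inducedCoords_temperature hq hf, fderiv_add_const,
      fderiv_fun_add (he.const_mul α) (hv.const_mul β), fderiv_const_mul he, fderiv_const_mul hv]
    rfl
  have pressure_rescale : (A 0 0 + A 1 0 * q.2) * (inducedCoords A q).2 =
      A 0 1 + A 1 1 * q.2 := mul_div_cancel₀ _ hq
  let e_T := fderiv ℝ e (inducedCoords A q) (1, 0)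
  let v_T := fderiv ℝ v (inducedCoords A q) (1, 0)
  rw [heatCapacity, fderiv_combination, fderiv_combination]
  calc
    _ = (A 0 0 + A 1 0 * q.2)⁻¹ *
        ((A 0 0 + A 1 0 * q.2) * e_T + (A 0 1 + A 1 1 * q.2) * v_T) := by ring
    _ = (A 0 0 + A 1 0 * q.2)⁻¹ *
        ((A 0 0 + A 1 0 * q.2) * ((inducedCoords A q).2 * v_T + e_T)) := by
      rw [← pressure_rescale]
      ring
    _ = heatCapacity e v (inducedCoords A q) := inv_mul_cancel_left₀ hq _

/-- The heat capacity `I₂ = p v_T + e_T` is invariant under the actions on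
states of the affine transformations `(e,v) ↦ (e − c·v, v)`,
`(e,v) ↦ (t·e, v)` and `(e,v) ↦ (e, s·v)` of `V`:
(a) for `ẽ(T,p) = e(T,p−c) − c·v(T,p−c)`, `ṽ(T,p) = v(T,p−c)` one has
`I₂(ẽ,ṽ)(T,p) = I₂(e,v)(T,p−c)`;
(b) for `ẽ(T,p) = t·e(T/t,p/t)`, `ṽ(T,p) = v(T/t,p/t)` (`t > 0`) one has
`I₂(ẽ,ṽ)(T,p) = I₂(e,v)(T/t,p/t)`;
(c) for `ẽ(T,p) = e(T,s·p)`, `ṽ(T,p) = s·v(T,s·p)` (`s > 0`) one has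
`I₂(ẽ,ṽ)(T,p) = I₂(e,v)(T,s·p)`. -/
theorem heat_capacity_invariant (U : Set (ℝ × ℝ)) (hUopen : IsOpen U)
    (e v : ℝ × ℝ → ℝ)
    (he : DifferentiableOn ℝ e U) (hv : DifferentiableOn ℝ v U) :
    (∀ c : ℝ, ∀ T p : ℝ, (T, p - c) ∈ U →
      heatCapacity (fun q => e (q.1, q.2 - c) - c * v (q.1, q.2 - c))
          (fun q => v (q.1, q.2 - c)) (T, p) =
        heatCapacity e v (T, p - c)) ∧
    (∀ t : ℝ, 0 < t → ∀ T p : ℝ, (T / t, p / t) ∈ U →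
      heatCapacity (fun q => t * e (q.1 / t, q.2 / t))
          (fun q => v (q.1 / t, q.2 / t)) (T, p) =
        heatCapacity e v (T / t, p / t)) ∧
    (∀ s : ℝ, 0 < s → ∀ T p : ℝ, (T, s * p) ∈ U →
      heatCapacity (fun q => e (q.1, s * q.2))
          (fun q => s * v (q.1, s * q.2)) (T, p) =
        heatCapacity e v (T, s * p)) := by
  have he_at {q : ℝ × ℝ} (hq : q ∈ U) : DifferentiableAt ℝ e q :=
    he.differentiableAt (hUopen.mem_nhds hq)
  have hv_at {q : ℝ × ℝ} (hq : q ∈ U) : DifferentiableAt ℝ v q :=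
    hv.differentiableAt (hUopen.mem_nhds hq)
  refine ⟨fun c T p hU ↦ ?_, fun t ht T p hU ↦ ?_, fun s _ T p hU ↦ ?_⟩
  · have coords (q : ℝ × ℝ) : inducedCoords !![1, -c; 0, 1] q = (q.1, q.2 - c) := by
      simp [inducedCoords, neg_add_eq_sub]
    simpa [coords, ← sub_eq_add_neg] using heat_capacity_invariant_general !![1, -c; 0, 1] 0
      (q := (T, p)) (by simp) (he_at (by rwa [coords])) (hv_at (by rwa [coords]))
  · have coords (q : ℝ × ℝ) : inducedCoords !![t, 0; 0, 1] q = (q.1 / t, q.2 / t) := by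
      simp [inducedCoords]
    simpa [coords] using heat_capacity_invariant_general !![t, 0; 0, 1] 0
      (q := (T, p)) (by simp [ht.ne']) (he_at (by rwa [coords])) (hv_at (by rwa [coords]))
  · have coords (q : ℝ × ℝ) : inducedCoords !![1, 0; 0, s] q = (q.1, s * q.2) := by
      simp [inducedCoords]
    simpa [coords] using heat_capacity_invariant_general !![1, 0; 0, s] 0
      (q := (T, p)) (by simp) (he_at (by rwa [coords])) (hv_at (by rwa [coords]))
end

section
/- Let U ⊆ {(T, p) ∈ ℝ² : T ≠ 0} be open, let e, v : U → ℝ be differentiable, and let t, s > 0. Define the transformed state ẽ(T, p) = t·e(T/t, s·p/t) and ṽ(T, p) = s·v(T/t, s·p/t) (the action of the scalings (e, v) ↦ (t·e, s·v), which induces (T, p) ↦ (t·T, t·p/s)). Then each of the five second-order functions e/T, p·v/T, e_T, e_T + p·v_T, and e_T − e_p·v_T/v_p is invariant: evaluating each of them on (ẽ, ṽ) at (T, p) gives its value on (e, v) at (T/t, s·p/t) (for the last function, at points where v_p ≠ 0). (The last two functions are the heat capacities at constant pressure and at constant volume, respectively; together with e/T, pv/T and e_T they generate the field of second-order differential invariants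 of the two-dimensional scaling group.) -/
/-!
Give a quantity weight `w` if its value for the transformed state at `(T, p)` is `w` times its value
for the original state at `(T/t, s·p/t)`. Then `e` and `T` have weight `t`, `v` has weight `s` and
`p` has weight `t/s`. By the chain rule `∂_T` divides a weight by `t` and `∂_p` divides it by `t/s`,
so `e_T` has weight `1`, `e_p` has weight `s`, `v_T` has weight `s/t` and `v_p` has weight `s²/t`.
In each of the five functions these weights cancel.
-/

/-- The five second-order functions `e/T`, `p·v/T`, `e_T`, `e_T + p·v_T`
(heat capacity at constant pressure) and `e_T − e_p·v_T/v_p`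
(heat capacity at constant volume) of a state `(e, v)`. -/
noncomputable def gasInv₁ (e v : ℝ × ℝ → ℝ) (q : ℝ × ℝ) : ℝ := e q / q.1
noncomputable def gasInv₂ (e v : ℝ × ℝ → ℝ) (q : ℝ × ℝ) : ℝ := q.2 * v q / q.1
noncomputable def gasInv₃ (e v : ℝ × ℝ → ℝ) (q : ℝ × ℝ) : ℝ := fderiv ℝ e q (1, 0)
noncomputable def gasInv₄ (e v : ℝ × ℝ → ℝ) (q : ℝ × ℝ) : ℝ :=
  fderiv ℝ e q (1, 0) + q.2 * fderiv ℝ v q (1, 0)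
noncomputable def gasInv₅ (e v : ℝ × ℝ → ℝ) (q : ℝ × ℝ) : ℝ :=
  fderiv ℝ e q (1, 0) - fderiv ℝ e q (0, 1) * fderiv ℝ v q (1, 0) / fderiv ℝ v q (0, 1)

section ChainRule

variable {𝕜 E F G : Type*} [NontriviallyNormedField 𝕜] [NormedAddCommGroup E] [NormedSpace 𝕜 E]
  [NormedAddCommGroup F] [NormedSpace 𝕜 F] [NormedAddCommGroup G] [NormedSpace 𝕜 G]

theorem fderiv_comp_prodMap_smul_apply (a b : 𝕜) {f : E × F → G} {q : E × F}
    (hf : DifferentiableAt 𝕜 f (a • q.1, b • q.2)) (w : E × F) :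
    fderiv 𝕜 (fun x : E × F => f (a • x.1, b • x.2)) q w =
      fderiv 𝕜 f (a • q.1, b • q.2) (a • w.1, b • w.2) := by
  have hscale : HasFDerivAt (fun x : E × F => (a • x.1, b • x.2))
      ((a • ContinuousLinearMap.fst 𝕜 E F).prod (b • ContinuousLinearMap.snd 𝕜 E F)) q :=
    (hasFDerivAt_fst.const_smul a).prodMk (hasFDerivAt_snd.const_smul b)
  exact congrArg (· w) (hf.hasFDerivAt.comp q hscale).fderiv

end ChainRule

section Rescaling

/-- The inverse of the point transformation `(T, p) ↦ (t·T, t·p/s)` which the scaling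
`(e, v) ↦ (t·e, s·v)` induces on temperature and pressure. -/
noncomputable def unscale (t s : ℝ) (q : ℝ × ℝ) : ℝ × ℝ := (q.1 / t, s * q.2 / t)

/-- The scaling `(e, v) ↦ (t·e, s·v)` acting on a function of temperature and pressure whose values
have weight `c`: the transformed state of `(e, v)` is `(rescale t t s e, rescale s t s v)`. -/
noncomputable def rescale (c t s : ℝ) (f : ℝ × ℝ → ℝ) (q : ℝ × ℝ) : ℝ := c * f (unscale t s q)

variable {t s : ℝ} {e v : ℝ × ℝ → ℝ} {q : ℝ × ℝ}

theorem unscale_eq_smul (t s : ℝ) (q : ℝ × ℝ) : unscale t s q = (t⁻¹ • q.1, (s / t) • q.2) := by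
  simp only [unscale, smul_eq_mul, div_eq_inv_mul, mul_assoc]

theorem fderiv_rescale_apply (c : ℝ) {f : ℝ × ℝ → ℝ} (hf : DifferentiableAt ℝ f (unscale t s q))
    (w : ℝ × ℝ) :
    fderiv ℝ (rescale c t s f) q w = c * fderiv ℝ f (unscale t s q) (unscale t s w) := by
  have hcomp : rescale c t s f = c • fun x : ℝ × ℝ => f (t⁻¹ • x.1, (s / t) • x.2) := by
    funext x
    rw [rescale, unscale_eq_smul, Pi.smul_apply, smul_eq_mul c]
  rw [unscale_eq_smul] at hf
  rw [hcomp, fderiv_const_smul_field, Pi.smul_apply, unscale_eq_smul, unscale_eq_smul,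
    ← fderiv_comp_prodMap_smul_apply _ _ hf, smul_apply, smul_eq_mul]

theorem fderiv_rescale_temperature (c : ℝ) {f : ℝ × ℝ → ℝ}
    (hf : DifferentiableAt ℝ f (unscale t s q)) :
    fderiv ℝ (rescale c t s f) q (1, 0) = c / t * fderiv ℝ f (unscale t s q) (1, 0) := by
  have hdir : unscale t s (1, 0) = t⁻¹ • (1, 0) := by simp [unscale]
  rw [fderiv_rescale_apply c hf, hdir, map_smul, smul_eq_mul, ← mul_assoc, div_eq_mul_inv]

theorem fderiv_rescale_pressure (c : ℝ) {f : ℝ × ℝ → ℝ}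
    (hf : DifferentiableAt ℝ f (unscale t s q)) :
    fderiv ℝ (rescale c t s f) q (0, 1) = c * (s / t) * fderiv ℝ f (unscale t s q) (0, 1) := by
  have hdir : unscale t s (0, 1) = (s / t) • (0, 1) := by simp [unscale]
  rw [fderiv_rescale_apply c hf, hdir, map_smul, smul_eq_mul, ← mul_assoc]

theorem gasInv₁_rescale (t s : ℝ) (e v : ℝ × ℝ → ℝ) (q : ℝ × ℝ) :
    gasInv₁ (rescale t t s e) (rescale s t s v) q = gasInv₁ e v (unscale t s q) := by
  simp only [gasInv₁, rescale, unscale, div_div_eq_mul_div, mul_comm t]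

theorem gasInv₂_rescale (ht : t ≠ 0) (e v : ℝ × ℝ → ℝ) (q : ℝ × ℝ) :
    gasInv₂ (rescale t t s e) (rescale s t s v) q = gasInv₂ e v (unscale t s q) := by
  simp only [gasInv₂, rescale, unscale]
  field_simp

theorem gasInv₃_rescale (ht : t ≠ 0) (v : ℝ × ℝ → ℝ) (he : DifferentiableAt ℝ e (unscale t s q)) :
    gasInv₃ (rescale t t s e) (rescale s t s v) q = gasInv₃ e v (unscale t s q) := by
  rw [gasInv₃, gasInv₃, fderiv_rescale_temperature t he, div_self ht, one_mul]

theorem gasInv₄_rescale (ht : t ≠ 0) (he : DifferentiableAt ℝ e (unscale t s q))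
    (hv : DifferentiableAt ℝ v (unscale t s q)) :
    gasInv₄ (rescale t t s e) (rescale s t s v) q = gasInv₄ e v (unscale t s q) := by
  have hpressure : q.2 * (s / t) = (unscale t s q).2 := by
    rw [unscale, mul_div_assoc', mul_comm]
  rw [gasInv₄, gasInv₄, fderiv_rescale_temperature t he, fderiv_rescale_temperature s hv,
    div_self ht, one_mul, ← mul_assoc, hpressure]

theorem gasInv₅_rescale (ht : t ≠ 0) (hs : s ≠ 0) (he : DifferentiableAt ℝ e (unscale t s q))
    (hv : DifferentiableAt ℝ v (unscale t s q)) :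
    gasInv₅ (rescale t t s e) (rescale s t s v) q = gasInv₅ e v (unscale t s q) := by
  have hweight : t * (s / t) * (s / t) = s * (s / t) := by
    rw [mul_div_cancel₀ s ht]
  have hweight_ne : s * (s / t) ≠ 0 := mul_ne_zero hs (div_ne_zero hs ht)
  rw [gasInv₅, gasInv₅, fderiv_rescale_temperature t he, fderiv_rescale_temperature s hv,
    fderiv_rescale_pressure t he, fderiv_rescale_pressure s hv, div_self ht, one_mul,
    mul_mul_mul_comm, hweight, mul_div_mul_left _ _ hweight_ne]

end Rescaling

theorem scaling_group_second_order_invariants_general {e v : ℝ × ℝ → ℝ} {t s T p : ℝ}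
    (ht : t ≠ 0) (hs : s ≠ 0) (_hT : T ≠ 0)
    (he : DifferentiableAt ℝ e (T / t, s * p / t))
    (hv : DifferentiableAt ℝ v (T / t, s * p / t)) :
    gasInv₁ (rescale t t s e) (rescale s t s v) (T, p) = gasInv₁ e v (T / t, s * p / t) ∧
    gasInv₂ (rescale t t s e) (rescale s t s v) (T, p) = gasInv₂ e v (T / t, s * p / t) ∧
    gasInv₃ (rescale t t s e) (rescale s t s v) (T, p) = gasInv₃ e v (T / t, s * p / t) ∧
    gasInv₄ (rescale t t s e) (rescale s t s v) (T, p) = gasInv₄ e v (T / t, s * p / t) ∧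
    (fderiv ℝ v (T / t, s * p / t) (0, 1) ≠ 0 →
      gasInv₅ (rescale t t s e) (rescale s t s v) (T, p) = gasInv₅ e v (T / t, s * p / t)) :=
  ⟨gasInv₁_rescale t s e v (T, p), gasInv₂_rescale ht e v (T, p), gasInv₃_rescale ht v he,
    gasInv₄_rescale ht he hv, fun _ => gasInv₅_rescale ht hs he hv⟩

/-- For the action of the scalings `(e, v) ↦ (t·e, s·v)` on states, given by
`ẽ(T,p) = t·e(T/t, s·p/t)`, `ṽ(T,p) = s·v(T/t, s·p/t)`, each of the five
second-order functions `e/T`, `p·v/T`, `e_T`, `e_T + p·v_T` and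
`e_T − e_p·v_T/v_p` is invariant: its value on `(ẽ, ṽ)` at `(T, p)` equals its
value on `(e, v)` at `(T/t, s·p/t)` (for the last one, where `v_p ≠ 0`). -/
theorem scaling_group_second_order_invariants (U : Set (ℝ × ℝ))
    (hUopen : IsOpen U) (hU : ∀ q ∈ U, q.1 ≠ 0)
    (e v : ℝ × ℝ → ℝ)
    (he : DifferentiableOn ℝ e U) (hv : DifferentiableOn ℝ v U)
    (t s : ℝ) (ht : 0 < t) (hs : 0 < s)
    (et vt : ℝ × ℝ → ℝ)
    (het : et = fun q => t * e (q.1 / t, s * q.2 / t))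
    (hvt : vt = fun q => s * v (q.1 / t, s * q.2 / t)) :
    ∀ T p : ℝ, (T / t, s * p / t) ∈ U →
      gasInv₁ et vt (T, p) = gasInv₁ e v (T / t, s * p / t) ∧
      gasInv₂ et vt (T, p) = gasInv₂ e v (T / t, s * p / t) ∧
      gasInv₃ et vt (T, p) = gasInv₃ e v (T / t, s * p / t) ∧
      gasInv₄ et vt (T, p) = gasInv₄ e v (T / t, s * p / t) ∧
      (fderiv ℝ v (T / t, s * p / t) (0, 1) ≠ 0 →
        gasInv₅ et vt (T, p) = gasInv₅ e v (T / t, s * p / t)) := by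
  subst het hvt
  intro T p hq
  have hU_nhds : U ∈ nhds (T / t, s * p / t) := hUopen.mem_nhds hq
  exact scaling_group_second_order_invariants_general ht.ne' hs.ne'
    (div_ne_zero_iff.1 (hU _ hq)).1 (he.differentiableAt hU_nhds) (hv.differentiableAt hU_nhds)
end
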